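/- arXiv:2605.13808 — 12 statements merged into one kernel-verified Lean document; each statement's English description precedes it below -/
import Mathlib

section
/- Let m ≥ 1 and let r_1,…,r_m, c_1,…,c_m, t_1,…,t_m be real numbers with r_i ≠ 0 for every i. Set r := r_1+⋯+r_m, c := c_1+⋯+c_m, t := t_1+⋯+t_m. Then c² − 2·r·t = Σ_{i=1}^m (r/r_i)·(c_i² − 2·r_i·t_i) − Σ_{1 ≤ j < k ≤ m} r_j·r_k·(c_j/r_j − c_k/r_k)². -/
/-- **Key discriminant identity.** For real numbers `r i ≠ 0`, `c i`, `t i` (`i = 1, …, m`)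
with totals `r = ∑ r i`, `c = ∑ c i`, `t = ∑ t i`, one has
`c² − 2·r·t = ∑ i (r/rᵢ)·(cᵢ² − 2·rᵢ·tᵢ) − ∑_{j<k} rⱼ·r_k·(cⱼ/rⱼ − c_k/r_k)²`. -/
theorem discriminant_sum_identity (m : ℕ) (hm : 1 ≤ m) (r c t : Fin m → ℝ)
    (hr : ∀ i, r i ≠ 0) :
    (∑ i, c i) ^ 2 - 2 * (∑ i, r i) * (∑ i, t i) =
      (∑ i, ((∑ j, r j) / r i) * (c i ^ 2 - 2 * r i * t i)) -
        ∑ j, ∑ k ∈ Finset.univ.filter (fun k => j < k),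
          r j * r k * (c j / r j - c k / r k) ^ 2 := by
  obtain ⟨s, hs⟩ : ∃ s : Fin m → ℝ, ∀ i, s i = c i / r i := ⟨_, fun _ => rfl⟩
  have hc : ∀ i, c i = r i * s i := fun i => by
    rw [hs, mul_div_cancel₀ _ (hr i)]
  simp only [← hs]
  have h1 : ∑ i, ((∑ j, r j) / r i) * (c i ^ 2 - 2 * r i * t i) =
      (∑ j, r j) * ∑ i, r i * s i ^ 2 - 2 * (∑ j, r j) * ∑ i, t i := by
    rw [Finset.mul_sum, Finset.mul_sum, ← Finset.sum_sub_distrib]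
    refine Finset.sum_congr rfl fun i _ => ?_
    have := hr i
    rw [hc i]
    field_simp
  have h2 : ∑ j, ∑ k, r j * r k * (s j - s k) ^ 2 =
      2 * ∑ j, ∑ k ∈ Finset.univ.filter (fun k => j < k), r j * r k * (s j - s k) ^ 2 := by
    rw [two_mul]
    simp only [Finset.sum_filter]
    conv_rhs => arg 2; rw [Finset.sum_comm]
    simp only [← Finset.sum_add_distrib]
    refine Finset.sum_congr rfl fun j _ => Finset.sum_congr rfl fun k _ => ?_
    rcases lt_trichotomy j k with h | h | h
    · simp [h, h.not_gt]
    · simp [h]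
    · simp only [h, h.not_gt, if_true, if_false]
      ring
  have h3 : ∑ j, ∑ k, r j * r k * (s j - s k) ^ 2 =
      2 * ((∑ j, r j) * ∑ i, r i * s i ^ 2) - 2 * (∑ i, c i) ^ 2 := by
    have e : ∀ j k, r j * r k * (s j - s k) ^ 2 =
        (r j * s j ^ 2) * r k + r j * (r k * s k ^ 2) - 2 * ((r j * s j) * (r k * s k)) :=
      fun j k => by ring
    simp only [e, hc, Finset.sum_add_distrib, Finset.sum_sub_distrib, ← Finset.mul_sum,
      ← Finset.sum_mul]
    ring
  rw [h1]
  linarith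
end

section
/- Let m ≥ 1 and let r_1,…,r_m, c_1,…,c_m, t_1,…,t_m be real numbers with r_i > 0 for every i. Set r := r_1+⋯+r_m, c := c_1+⋯+c_m, t := t_1+⋯+t_m and μ_i := c_i/r_i, and let μ_max := max_i μ_i and μ_min := min_i μ_i. Then c² − 2·r·t ≥ Σ_{i=1}^m (r/r_i)·(c_i² − 2·r_i·t_i) − (1/4)·r²·(μ_max − μ_min)². -/
/-- **Key discriminant inequality.** For positive real numbers `r i` and real numbers
`c i`, `t i` (`i = 1, …, m`) with totals `r = ∑ r i`, `c = ∑ c i`, `t = ∑ t i` and slopes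
`μ i = c i / r i`, one has
`c² − 2·r·t ≥ ∑ i (r/rᵢ)·(cᵢ² − 2·rᵢ·tᵢ) − (1/4)·r²·(μ_max − μ_min)²`. -/
theorem discriminant_sum_inequality (m : ℕ) (hm : 1 ≤ m) (r c t : Fin m → ℝ)
    (hr : ∀ i, 0 < r i) :
    (∑ i, c i) ^ 2 - 2 * (∑ i, r i) * (∑ i, t i) ≥
      (∑ i, ((∑ j, r j) / r i) * (c i ^ 2 - 2 * r i * t i)) -
        (1 / 4) * (∑ i, r i) ^ 2 *
          ((Finset.univ.sup'
              (Finset.univ_nonempty_iff.mpr ⟨⟨0, Nat.lt_of_lt_of_le Nat.zero_lt_one hm⟩⟩)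
              (fun i => c i / r i)) -
            (Finset.univ.inf'
              (Finset.univ_nonempty_iff.mpr ⟨⟨0, Nat.lt_of_lt_of_le Nat.zero_lt_one hm⟩⟩)
              (fun i => c i / r i))) ^ 2 := by
  generalize hM : Finset.univ.sup' _ (fun i => c i / r i) = M
  generalize hN : Finset.univ.inf' _ (fun i => c i / r i) = N
  have h1 : ∀ i, c i / r i ≤ M := fun i => by
    rw [← hM]
    exact Finset.le_sup' (fun i => c i / r i) (Finset.mem_univ i)
  have h2 : ∀ i, N ≤ c i / r i := fun i => by
    rw [← hN]
    exact Finset.inf'_le (fun i => c i / r i) (Finset.mem_univ i)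
  have h3 : ∑ i, c i ^ 2 / r i ≤ (M + N) * (∑ i, c i) - M * N * ∑ i, r i := by
    rw [Finset.mul_sum, Finset.mul_sum, ← Finset.sum_sub_distrib]
    refine Finset.sum_le_sum fun i _ => ?_
    have h := mul_nonneg (hr i).le
      (mul_nonneg (sub_nonneg.2 (h1 i)) (sub_nonneg.2 (h2 i)))
    have hne := (hr i).ne'
    have e : r i * ((M - c i / r i) * (c i / r i - N)) =
        (M + N) * c i - M * N * r i - c i ^ 2 / r i := by
      field_simp
      ring
    linarith
  have h4 : ∑ i, ((∑ j, r j) / r i) * (c i ^ 2 - 2 * r i * t i) =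
      (∑ j, r j) * (∑ i, c i ^ 2 / r i) - 2 * (∑ j, r j) * ∑ i, t i := by
    rw [Finset.mul_sum, Finset.mul_sum, ← Finset.sum_sub_distrib]
    refine Finset.sum_congr rfl fun i _ => ?_
    have hne := (hr i).ne'
    field_simp
  have h5 : 0 ≤ ∑ j, r j := Finset.sum_nonneg fun i _ => (hr i).le
  have h6 := mul_le_mul_of_nonneg_left h3 h5
  rw [h4]
  nlinarith [sq_nonneg ((∑ i, c i) - (M + N) * (∑ i, r i) / 2)]
end

section
/- Let a > 0 and b, ξ, α, β be real numbers with α > a²/6 + |β|·a/2. On ℝ⁴ with coordinates x₀, x₁, x₂, x₃ define the quadratic forms Δ̄(x) := x₁² − 2·x₂·x₀ and ∇(x) := 3·ξ·a²·x₀² + 2·x₂·(2·x₂ − 3·ξ·x₀) − 6·x₁·(x₃ + b·ξ·x₀), and let Z : ℝ⁴ → ℂ be the ℝ-linear map Z(x) := −x₃ − b·ξ·x₀ + β·x₂ + α·x₁ + i·(x₂ − (a²/2)·x₀). Then there exists a nonempty open interval I ⊆ (a², 6α) such that for every K ∈ I, the quadratic form K·Δ̄ + ∇ is negative definite on the kernel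 of Z, i.e. (K·Δ̄ + ∇)(x) < 0 for every nonzero x ∈ ℝ⁴ with Z(x) = 0. -/
/-- The discriminant quadratic form `Δ̄(x) = x₁² − 2·x₂·x₀` on `ℝ⁴`. -/
noncomputable def deltaBarQ (x : Fin 4 → ℝ) : ℝ := x 1 ^ 2 - 2 * x 2 * x 0

/-- The Bogomolov–Gieseker-type quadratic form
`∇(x) = 3·ξ·a²·x₀² + 2·x₂·(2·x₂ − 3·ξ·x₀) − 6·x₁·(x₃ + b·ξ·x₀)` on `ℝ⁴`. -/
noncomputable def nablaQ (a b ξ : ℝ) (x : Fin 4 → ℝ) : ℝ :=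
  3 * ξ * a ^ 2 * x 0 ^ 2 + 2 * x 2 * (2 * x 2 - 3 * ξ * x 0) -
    6 * x 1 * (x 3 + b * ξ * x 0)

/-- The (ℝ-linear) central charge
`Z(x) = −x₃ − b·ξ·x₀ + β·x₂ + α·x₁ + i·(x₂ − (a²/2)·x₀) : ℝ⁴ → ℂ`. -/
noncomputable def centralChargeZ (a b ξ α β : ℝ) (x : Fin 4 → ℝ) : ℂ :=
  Complex.ofReal (-x 3 - b * ξ * x 0 + β * x 2 + α * x 1) +
    Complex.I * Complex.ofReal (x 2 - a ^ 2 / 2 * x 0)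

/-- **Support property lemma.** If `a > 0` and `α > a²/6 + |β|·a/2`, then there is a nonempty
open interval `I ⊆ (a², 6α)` such that for every `K ∈ I` the quadratic form `K·Δ̄ + ∇` is
negative definite on the kernel of `Z`. -/
theorem exists_interval_negdef_on_ker_centralCharge (a b ξ α β : ℝ) (ha : 0 < a)
    (hα : α > a ^ 2 / 6 + |β| * a / 2) :
    ∃ K₁ K₂ : ℝ, K₁ < K₂ ∧ a ^ 2 ≤ K₁ ∧ K₂ ≤ 6 * α ∧
      ∀ K ∈ Set.Ioo K₁ K₂, ∀ x : Fin 4 → ℝ, x ≠ 0 →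
        centralChargeZ a b ξ α β x = 0 →
        K * deltaBarQ x + nablaQ a b ξ x < 0 := by
  have hs : |3 * β * a| = 3 * |β| * a := by
    rw [abs_mul, abs_mul, abs_of_pos ha, abs_of_pos (by norm_num : (0:ℝ) < 3)]
  obtain ⟨s, hsd⟩ : ∃ s, s = |3 * β * a| := ⟨_, rfl⟩
  have hs0 : 0 ≤ s := hsd ▸ abs_nonneg _
  have h1 : 3 * β * a ≤ s := hsd ▸ le_abs_self _
  have h2 : -(3 * β * a) ≤ s := hsd ▸ neg_le_abs _
  refine ⟨a ^ 2 + s / 2, 6 * α - s / 2, by linarith, by linarith, by linarith, ?_⟩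
  rintro K ⟨hK1, hK2⟩ x hx hZ
  have hre := congrArg Complex.re hZ
  have him := congrArg Complex.im hZ
  simp [centralChargeZ, -Complex.ofReal_add, -Complex.ofReal_sub, -Complex.ofReal_mul,
    -Complex.ofReal_neg] at hre him
  have e2 : x 2 = a ^ 2 / 2 * x 0 := by linarith
  have e3 : x 3 = -(b * ξ * x 0) + β * (a ^ 2 / 2 * x 0) + α * x 1 := by
    rw [e2] at hre; linarith
  have key : K * deltaBarQ x + nablaQ a b ξ x =
      -((6 * α - K) * x 1 ^ 2 + (3 * β * a) * (a * x 0) * x 1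
        + (K - a ^ 2) * (a * x 0) ^ 2) := by
    simp only [deltaBarQ, nablaQ, e2, e3]; ring
  rw [key]
  generalize hc : 3 * β * a = c at *
  have hpos : 0 < x 1 ^ 2 + (a * x 0) ^ 2 := by
    by_contra hn
    have z1 : x 1 = 0 := by nlinarith [sq_nonneg (x 1), sq_nonneg (a * x 0)]
    have z0' : a * x 0 = 0 := by nlinarith [sq_nonneg (x 1), sq_nonneg (a * x 0)]
    have z0 : x 0 = 0 := (mul_eq_zero.mp z0').resolve_left ha.ne'
    apply hx
    ext i
    fin_cases i
    · simpa using z0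
    · simpa using z1
    · simp [e2, z0]
    · simp [e3, z0, z1]
  generalize a * x 0 = y at *
  generalize x 1 = z at *
  obtain ⟨d, hd, hd1, hd2⟩ : ∃ d > 0, s / 2 + d ≤ 6 * α - K ∧ s / 2 + d ≤ K - a ^ 2 :=
    ⟨min (6 * α - K - s / 2) (K - a ^ 2 - s / 2), lt_min (by linarith) (by linarith),
      by linarith [min_le_left (6 * α - K - s / 2) (K - a ^ 2 - s / 2)],
      by linarith [min_le_right (6 * α - K - s / 2) (K - a ^ 2 - s / 2)]⟩
  have i1 := mul_le_mul_of_nonneg_right hd1 (sq_nonneg z)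
  have i2 := mul_le_mul_of_nonneg_right hd2 (sq_nonneg y)
  have i3 := mul_pos hd hpos
  have i4 := mul_nonneg (by linarith : 0 ≤ s + c) (sq_nonneg (y + z))
  have i5 := mul_nonneg (by linarith : 0 ≤ s - c) (sq_nonneg (y - z))
  nlinarith
end

section
/- Let 𝒜 be an abelian category and let 𝒞 be a class of objects of 𝒜 containing the zero objects and closed under subobjects, quotient objects, and extensions. If ι₁ : E → T₁ and ι₂ : E → T₂ are two 𝒞-hulls of the same object E, then there exists a unique isomorphism φ : T₁ → T₂ with φ ∘ ι₁ = ι₂. -/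
open CategoryTheory CategoryTheory.Limits

/-- A class of objects of an abelian category containing the zero objects and closed under
subobjects, quotient objects, and extensions (a Serre class). -/
def IsSerreClass {𝒜 : Type*} [Category 𝒜] [Abelian 𝒜] (P : 𝒜 → Prop) : Prop :=
  (∀ X : 𝒜, IsZero X → P X) ∧
    (∀ ⦃X Y : 𝒜⦄ (f : X ⟶ Y), Mono f → P Y → P X) ∧
    (∀ ⦃X Y : 𝒜⦄ (f : X ⟶ Y), Epi f → P X → P Y) ∧
    (∀ S : ShortComplex 𝒜, S.ShortExact → P S.X₁ → P S.X₃ → P S.X₂)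

/-- An object `X` is `𝒞`-torsion-free if every morphism `c ⟶ X` with `c ∈ 𝒞` is zero. -/
def IsTorsionFreeFor {𝒜 : Type*} [Category 𝒜] [Abelian 𝒜] (P : 𝒜 → Prop) (X : 𝒜) : Prop :=
  ∀ ⦃c : 𝒜⦄, P c → ∀ f : c ⟶ X, f = 0

/-- An object `T` is `𝒞`-saturated if it is `𝒞`-torsion-free and every short exact sequence
`0 → T → Y → c → 0` with `c ∈ 𝒞` splits (equivalently, every monomorphism `T ⟶ Y` with
cokernel in `𝒞` admits a retraction). -/
def IsSaturatedFor {𝒜 : Type*} [Category 𝒜] [Abelian 𝒜] (P : 𝒜 → Prop) (T : 𝒜) : Prop :=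
  IsTorsionFreeFor P T ∧
    ∀ ⦃Y : 𝒜⦄ (f : T ⟶ Y), Mono f → P (cokernel f) → ∃ r : Y ⟶ T, f ≫ r = 𝟙 T

/-- A `𝒞`-hull of `E` is a monomorphism `ι : E ⟶ T` such that `coker ι ∈ 𝒞` and `T` is
`𝒞`-saturated. -/
def IsHullFor {𝒜 : Type*} [Category 𝒜] [Abelian 𝒜] (P : 𝒜 → Prop)
    {E T : 𝒜} (ι : E ⟶ T) : Prop :=
  Mono ι ∧ P (cokernel ι) ∧ IsSaturatedFor P T

theorem hull_hom_ext {𝒜 : Type*} [Category 𝒜] [Abelian 𝒜] {P : 𝒜 → Prop} {E T X : 𝒜}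
    {ι : E ⟶ T} (h : P (cokernel ι)) (hX : IsTorsionFreeFor P X) {f g : T ⟶ X}
    (w : ι ≫ f = ι ≫ g) : f = g := by
  have h0 : ι ≫ (f - g) = 0 := by rw [Preadditive.comp_sub, w, sub_self]
  have h1 := hX h (cokernel.desc ι (f - g) h0)
  have h2 := cokernel.π_desc ι (f - g) h0
  rw [h1, comp_zero] at h2
  exact sub_eq_zero.mp h2.symm

theorem hull_lift {𝒜 : Type*} [Category 𝒜] [Abelian 𝒜] {P : 𝒜 → Prop}
    (hP : IsSerreClass P) {E T X : 𝒜} {ι : E ⟶ T} (hm : Mono ι) (h : P (cokernel ι))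
    (hX : IsSaturatedFor P X) (f : E ⟶ X) : ∃ g : T ⟶ X, ι ≫ g = f := by
  have hepi : Epi (cokernel.map ι (pushout.inr ι f) f (pushout.inl ι f) pushout.condition) := by
    refine Preadditive.epi_of_cancel_zero _ fun g hg => ?_
    have h1 : cokernel.π (pushout.inr ι f) ≫ g = 0 := by
      apply pushout.hom_ext
      · have h2 := congrArg (fun k => cokernel.π ι ≫ k) hg
        simpa using h2
      · simp
    rw [← cancel_epi (cokernel.π (pushout.inr ι f)), h1, comp_zero]
  obtain ⟨r, hr⟩ := hX.2 (pushout.inr ι f) inferInstance (hP.2.2.1 _ hepi h)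
  exact ⟨pushout.inl ι f ≫ r, by rw [pushout.condition_assoc, hr, Category.comp_id]⟩

/-- **Uniqueness of hulls.** Two `𝒞`-hulls of the same object are related by a unique
isomorphism compatible with the hull maps. -/
theorem hull_unique_up_to_unique_iso {𝒜 : Type*} [Category 𝒜] [Abelian 𝒜]
    {P : 𝒜 → Prop} (hP : IsSerreClass P) {E T₁ T₂ : 𝒜}
    {ι₁ : E ⟶ T₁} {ι₂ : E ⟶ T₂} (h₁ : IsHullFor P ι₁) (h₂ : IsHullFor P ι₂) :
    ∃! φ : T₁ ≅ T₂, ι₁ ≫ φ.hom = ι₂ := by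
  obtain ⟨m₁, c₁, s₁⟩ := h₁
  obtain ⟨m₂, c₂, s₂⟩ := h₂
  obtain ⟨a, ha⟩ := hull_lift hP m₁ c₁ s₂ ι₂
  obtain ⟨b, hb⟩ := hull_lift hP m₂ c₂ s₁ ι₁
  refine ⟨⟨a, b, ?_, ?_⟩, ha, fun ψ hψ => ?_⟩
  · exact hull_hom_ext c₁ s₁.1 (by rw [reassoc_of% ha, hb, Category.comp_id])
  · exact hull_hom_ext c₂ s₂.1 (by rw [reassoc_of% hb, ha, Category.comp_id])
  · ext
    exact hull_hom_ext c₁ s₂.1 (hψ.trans ha.symm)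
end

section
/- Let 𝒜 be an abelian category and let 𝒞 be a class of objects of 𝒜 containing the zero objects and closed under subobjects, quotient objects, and extensions. Let u : F → E be a monomorphism in 𝒜, and let ι_F : F → T_F and ι_E : E → T_E be 𝒞-hulls of F and E respectively. Then there exists a unique morphism v : T_F → T_E with v ∘ ι_F = ι_E ∘ u; this morphism v is a monomorphism, and if moreover coker(u) ∈ 𝒞 then v is an isomorphism. -/
open CategoryTheory CategoryTheory.Limits

theorem hull_aux_ext {𝒜 : Type*} [Category 𝒜] [Abelian 𝒜] {P : 𝒜 → Prop} {F G T : 𝒜}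
    (i : F ⟶ G) (hc : P (cokernel i)) (hT : IsTorsionFreeFor P T)
    {v w : G ⟶ T} (h : i ≫ v = i ≫ w) : v = w := by
  have h0 : i ≫ (v - w) = 0 := by rw [Preadditive.comp_sub, h, sub_self]
  have h1 : cokernel.desc i (v - w) h0 = 0 := hT hc _
  have h2 := cokernel.π_desc i (v - w) h0
  rw [h1, comp_zero] at h2
  exact sub_eq_zero.mp h2.symm

theorem hull_aux_lift {𝒜 : Type*} [Category 𝒜] [Abelian 𝒜] {P : 𝒜 → Prop}
    (hP : IsSerreClass P) {F G T : 𝒜}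
    (i : F ⟶ G) (hi : Mono i) (hc : P (cokernel i)) (hT : IsSaturatedFor P T)
    (g : F ⟶ T) : ∃ v : G ⟶ T, i ≫ v = g := by
  have sq := IsPushout.of_hasPushout i g
  have := isIso_cokernel_map_of_isPushout sq
  have hq : P (cokernel (pushout.inr i g)) :=
    hP.2.2.1 (cokernel.map i (pushout.inr i g) g (pushout.inl i g) sq.w)
      inferInstance hc
  obtain ⟨r, hr⟩ := hT.2 (pushout.inr i g) inferInstance hq
  refine ⟨pushout.inl i g ≫ r, ?_⟩
  rw [pushout.condition_assoc, hr, Category.comp_id]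

/-- **Functoriality of hulls along monomorphisms.** A monomorphism `u : F ⟶ E` extends
uniquely to a morphism of `𝒞`-hulls `v : T_F ⟶ T_E`; this `v` is a monomorphism, and it is
an isomorphism if moreover `coker u ∈ 𝒞`. -/
theorem hull_map_of_mono {𝒜 : Type*} [Category 𝒜] [Abelian 𝒜]
    {P : 𝒜 → Prop} (hP : IsSerreClass P) {F E TF TE : 𝒜}
    (u : F ⟶ E) (hu : Mono u) {ιF : F ⟶ TF} {ιE : E ⟶ TE}
    (hF : IsHullFor P ιF) (hE : IsHullFor P ιE) :
    (∃! v : TF ⟶ TE, ιF ≫ v = u ≫ ιE) ∧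
      ∀ v : TF ⟶ TE, ιF ≫ v = u ≫ ιE →
        Mono v ∧ (P (cokernel u) → IsIso v) := by
  obtain ⟨hFm, hFc, hFs⟩ := hF
  obtain ⟨hEm, hEc, hEs⟩ := hE
  refine ⟨?_, fun v hv => ⟨?_, fun hc => ?_⟩⟩
  · obtain ⟨v, hv⟩ := hull_aux_lift hP ιF hFm hFc hEs (u ≫ ιE)
    exact ⟨v, hv, fun w hw => hull_aux_ext ιF hFc hEs.1 (hw.trans hv.symm)⟩
  · have hm : Mono (kernel.ι v ≫ cokernel.π ιF) := by
      refine Preadditive.mono_of_cancel_zero _ fun x hx => ?_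
      rw [← Category.assoc] at hx
      have hy := Abelian.monoLift_comp ιF (x ≫ kernel.ι v) hx
      have h0 : Abelian.monoLift ιF (x ≫ kernel.ι v) hx = 0 := by
        rw [← cancel_mono (u ≫ ιE), ← hv, ← Category.assoc, hy]
        simp
      rw [h0, zero_comp] at hy
      rw [← cancel_mono (kernel.ι v), ← hy, zero_comp]
    exact Preadditive.mono_of_kernel_zero (hFs.1 (hP.2.1 _ hm hFc) (kernel.ι v))
  · obtain ⟨w₁, hw₁⟩ := hull_aux_lift hP u hu hc hFs ιF
    obtain ⟨w, hw⟩ := hull_aux_lift hP ιE hEm hEc hFs w₁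
    refine ⟨w, hull_aux_ext ιF hFc hFs.1 ?_, hull_aux_ext ιE hEc hEs.1
      (hull_aux_ext u hc hEs.1 ?_)⟩
    · rw [← Category.assoc, hv, Category.assoc, hw, hw₁, Category.comp_id]
    · rw [← Category.assoc ιE, hw, ← Category.assoc, hw₁, hv, Category.comp_id]
end

section
/- Let 𝒜 be an abelian category and let 𝒞 be a class of objects of 𝒜 containing the zero objects and closed under subobjects, quotient objects, and extensions. Let 0 → F → E → G → 0 be a short exact sequence in 𝒜 such that E is 𝒞-saturated and G is 𝒞-torsion-free. Then F is 𝒞-saturated. -/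
open CategoryTheory CategoryTheory.Limits

/-- If `0 → F → E → G → 0` is a short exact sequence with `E` `𝒞`-saturated and `G`
`𝒞`-torsion-free, then `F` is `𝒞`-saturated. -/
theorem saturated_of_shortExact {𝒜 : Type*} [Category 𝒜] [Abelian 𝒜]
    {P : 𝒜 → Prop} (hP : IsSerreClass P) (S : ShortComplex 𝒜) (hS : S.ShortExact)
    (hE : IsSaturatedFor P S.X₂) (hG : IsTorsionFreeFor P S.X₃) :
    IsSaturatedFor P S.X₁ := by
  haveI := hS.mono_f
  obtain ⟨-, -, hquot, -⟩ := hP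
  refine ⟨fun c hc u => ?_, fun Y f hf hc => ?_⟩
  · rw [← cancel_mono S.f, hE.1 hc (u ≫ S.f), zero_comp]
  · haveI := hf
    let q : cokernel f ⟶ cokernel (pushout.inl S.f f) :=
      cokernel.desc f (pushout.inr S.f f ≫ cokernel.π (pushout.inl S.f f)) (by
        rw [← Category.assoc, ← pushout.condition, Category.assoc, cokernel.condition, comp_zero])
    have hq : cokernel.π f ≫ q = pushout.inr S.f f ≫ cokernel.π (pushout.inl S.f f) :=
      cokernel.π_desc _ _ _
    have hqe : Epi q := by
      refine ⟨fun a b hab => ?_⟩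
      rw [← cancel_epi (cokernel.π (pushout.inl S.f f))]
      apply pushout.hom_ext
      · simp only [← Category.assoc, cokernel.condition, zero_comp]
      · rw [← Category.assoc, ← Category.assoc, ← hq, Category.assoc, Category.assoc, hab]
    obtain ⟨r, hr⟩ := hE.2 (pushout.inl S.f f) inferInstance (hquot q hqe hc)
    have h1 : f ≫ pushout.inr S.f f ≫ r = S.f := by
      rw [← Category.assoc, ← pushout.condition, Category.assoc, hr, Category.comp_id]
    have h0 : f ≫ (pushout.inr S.f f ≫ r) ≫ S.g = 0 := by
      rw [← Category.assoc, h1, S.zero]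
    have h2 : (pushout.inr S.f f ≫ r) ≫ S.g = 0 := by
      rw [← cokernel.π_desc f _ h0, hG hc (cokernel.desc f _ h0), comp_zero]
    refine ⟨hS.exact.lift _ h2, ?_⟩
    rw [← cancel_mono S.f, Category.assoc, hS.exact.lift_f, h1, Category.id_comp]
end

section
/- Let 𝒜 be an abelian category and let 𝒞 be a class of objects of 𝒜 containing the zero objects and closed under subobjects, quotient objects, and extensions. Let (G_n)_{n≥1} be objects of 𝒜 together with monomorphisms g_n : G_n → G_{n+1} such that every G_n is 𝒞-torsion-free and coker(g_n) ∈ 𝒞 for all n ≥ 1. Assume there is a monomorphism ι : G_1 → T such that coker(ι) ∈ 𝒞, every short exact sequence 0 → T → Y → c → 0 with c ∈ 𝒞 splits, and coker(ι) is a Noetherian object of 𝒜 (every ascending chain of subobjects of coker(ι) stabilizes). Then the sequence stabilizes: there exists N such that g_n is an isomorphism for all n ≥ N. -/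
open CategoryTheory CategoryTheory.Limits

theorem ext_step {𝒜 : Type*} [Category 𝒜] [Abelian 𝒜]
    {P : 𝒜 → Prop} (hP : IsSerreClass P) {A B T : 𝒜} (g : A ⟶ B) [Mono g]
    (htf : IsTorsionFreeFor P B) (hq : P (cokernel g))
    (hsplit : ∀ ⦃Y : 𝒜⦄ (f : T ⟶ Y), Mono f → P (cokernel f) →
      ∃ r : Y ⟶ T, f ≫ r = 𝟙 T) (φ : A ⟶ T) [Mono φ] :
    ∃ ψ : B ⟶ T, Mono ψ ∧ g ≫ ψ = φ := by
  obtain ⟨_, hsub, hquot, _⟩ := hP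
  have hc : P (cokernel (pushout.inl φ g)) := by
    let m : cokernel g ⟶ cokernel (pushout.inl φ g) :=
      cokernel.map g (pushout.inl φ g) φ (pushout.inr φ g) pushout.condition.symm
    refine hquot m ?_ hq
    have : Epi (cokernel.π g ≫ m) := by
      refine Preadditive.epi_of_cancel_zero _ fun {Z} h hh => ?_
      have h1 : pushout.inr φ g ≫ cokernel.π (pushout.inl φ g) ≫ h = 0 := by
        simpa [m] using hh
      rw [← cancel_epi (cokernel.π (pushout.inl φ g)), comp_zero]
      apply pushout.hom_ext
      · simp
      · simpa using h1
    exact epi_of_epi (cokernel.π g) m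
  obtain ⟨r, hr⟩ := hsplit (pushout.inl φ g) inferInstance hc
  have hcomp : g ≫ pushout.inr φ g ≫ r = φ := by
    rw [← pushout.condition_assoc, hr, Category.comp_id]
  refine ⟨pushout.inr φ g ≫ r, ?_, hcomp⟩
  set ψ := pushout.inr φ g ≫ r with hψ
  have hm : Mono (kernel.ι ψ ≫ cokernel.π g) := by
    refine Preadditive.mono_of_cancel_zero _ fun {Z} h hh => ?_
    have hh' : (h ≫ kernel.ι ψ) ≫ cokernel.π g = 0 := by simpa using hh
    let l := Abelian.monoLift g (h ≫ kernel.ι ψ) hh'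
    have hl : l ≫ g = h ≫ kernel.ι ψ := Abelian.monoLift_comp g _ hh'
    have : l = 0 := by
      rw [← cancel_mono φ, zero_comp, ← hcomp, reassoc_of% hl]
      simp
    rw [← cancel_mono (kernel.ι ψ), ← hl, this]
    simp
  exact Preadditive.mono_of_kernel_zero (htf (hsub _ hm hq) (kernel.ι ψ))

theorem iso_step {𝒜 : Type*} [Category 𝒜] [Abelian 𝒜] {A B E T : 𝒜} (g : A ⟶ B) [Mono g]
    (ι : E ⟶ T) (a : E ⟶ A) (φ : A ⟶ T) (ψ : B ⟶ T) [Mono ι] [Mono ψ]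
    (h : g ≫ ψ = φ) (ha : a ≫ φ = ι)
    (hle : imageSubobject (ψ ≫ cokernel.π ι) ≤ imageSubobject (φ ≫ cokernel.π ι)) :
    IsIso g := by
  suffices Epi g from isIso_of_mono_of_epi g
  rw [epi_iff_surjective_up_to_refinements]
  intro X x
  let w : X ⟶ (imageSubobject (φ ≫ cokernel.π ι) : 𝒜) :=
    x ≫ factorThruImageSubobject (ψ ≫ cokernel.π ι) ≫ Subobject.ofLE _ _ hle
  obtain ⟨X', p, hp, y, hy⟩ :=
    surjective_up_to_refinements_of_epi (factorThruImageSubobject (φ ≫ cokernel.π ι)) w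
  have hy' : p ≫ x ≫ ψ ≫ cokernel.π ι = y ≫ φ ≫ cokernel.π ι := by
    have := congrArg (· ≫ (imageSubobject (φ ≫ cokernel.π ι)).arrow) hy
    simpa [w] using this
  have h0 : (p ≫ x ≫ ψ - y ≫ φ) ≫ cokernel.π ι = 0 := by
    simp [Preadditive.sub_comp, hy']
  let z := Abelian.monoLift ι _ h0
  have hz : z ≫ ι = p ≫ x ≫ ψ - y ≫ φ := Abelian.monoLift_comp ι _ h0
  refine ⟨X', p, hp, y + z ≫ a, ?_⟩
  rw [← cancel_mono ψ]
  simp only [Category.assoc, Preadditive.add_comp, h, ha, hz]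
  abel

/-- **Stabilization of chains with quotients in `𝒞`.** Given monomorphisms
`g n : G n ⟶ G (n+1)` between `𝒞`-torsion-free objects with `coker (g n) ∈ 𝒞`, and a
monomorphism `ι : G 0 ⟶ T` with `coker ι ∈ 𝒞`, such that every short exact sequence
`0 → T → Y → c → 0` with `c ∈ 𝒞` splits and `coker ι` is a Noetherian object (every
ascending chain of subobjects stabilizes), the chain stabilizes: `g n` is an isomorphism
for all large `n`. -/
theorem chain_stabilizes {𝒜 : Type*} [Category 𝒜] [Abelian 𝒜]
    {P : 𝒜 → Prop} (hP : IsSerreClass P) (G : ℕ → 𝒜) (g : ∀ n, G n ⟶ G (n + 1))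
    (hg : ∀ n, Mono (g n)) (htf : ∀ n, IsTorsionFreeFor P (G n))
    (hq : ∀ n, P (cokernel (g n))) {T : 𝒜} (ι : G 0 ⟶ T) (hι : Mono ι)
    (hcι : P (cokernel ι))
    (hsplit : ∀ ⦃Y : 𝒜⦄ (f : T ⟶ Y), Mono f → P (cokernel f) →
      ∃ r : Y ⟶ T, f ≫ r = 𝟙 T)
    (hnoeth : ∀ c : ℕ →o Subobject (cokernel ι), ∃ N, ∀ n, N ≤ n → c n = c N) :
    ∃ N, ∀ n, N ≤ n → IsIso (g n) := by
  have step : ∀ n (φ : {φ : G n ⟶ T // Mono φ}),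
      ∃ ψ : {ψ : G (n + 1) ⟶ T // Mono ψ}, g n ≫ ψ.1 = φ.1 := by
    rintro n ⟨φ, hφ⟩
    have := hg n
    obtain ⟨ψ, h1, h2⟩ := ext_step hP (g n) (htf _) (hq n) hsplit φ
    exact ⟨⟨ψ, h1⟩, h2⟩
  choose s hs using step
  let Φ : ∀ n, {φ : G n ⟶ T // Mono φ} := fun n => Nat.rec ⟨ι, hι⟩ (fun n φ => s n φ) n
  have hΦ : ∀ n, g n ≫ (Φ (n + 1)).1 = (Φ n).1 := fun n => hs n (Φ n)
  have ha : ∀ n, ∃ a : G 0 ⟶ G n, a ≫ (Φ n).1 = ι := by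
    intro n
    induction n with
    | zero => exact ⟨𝟙 _, Category.id_comp _⟩
    | succ n ih =>
      obtain ⟨a, ha⟩ := ih
      exact ⟨a ≫ g n, by rw [Category.assoc, hΦ, ha]⟩
  let c : ℕ → Subobject (cokernel ι) := fun n => imageSubobject ((Φ n).1 ≫ cokernel.π ι)
  have hc : Monotone c := by
    refine monotone_nat_of_le_succ fun n => ?_
    have h := imageSubobject_comp_le (g n) ((Φ (n + 1)).1 ≫ cokernel.π ι)
    rw [← Category.assoc, hΦ] at h
    exact h
  obtain ⟨N, hN⟩ := hnoeth ⟨c, hc⟩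
  refine ⟨N, fun n hn => ?_⟩
  obtain ⟨a, ha⟩ := ha n
  have := hg n
  have := (Φ (n + 1)).2
  refine iso_step (g n) ι a (Φ n).1 (Φ (n + 1)).1 (hΦ n) ha ?_
  have h1 : c n = c N := hN n hn
  have h2 : c (n + 1) = c N := hN (n + 1) (by omega)
  exact (h2.trans h1.symm).le
end

section
/- Let 𝒜 be an abelian category and let 𝒞 be a class of objects of 𝒜 containing the zero objects and closed under subobjects, quotient objects, and extensions. Let u : F → E be a monomorphism with coker(u) ∈ 𝒞, assume E is 𝒞-torsion-free, and let ι : F → T be a 𝒞-hull of F. Then there exists a unique morphism w : E → T with w ∘ u = ι, and this w is a monomorphism. -/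
open CategoryTheory CategoryTheory.Limits

/-- **Extension of hull maps.** If `u : F ⟶ E` is a monomorphism with `coker u ∈ 𝒞`, `E` is
`𝒞`-torsion-free, and `ι : F ⟶ T` is a `𝒞`-hull of `F`, then `ι` factors uniquely through
`u`, and the resulting morphism `E ⟶ T` is a monomorphism. -/
theorem hull_factor_of_mono {𝒜 : Type*} [Category 𝒜] [Abelian 𝒜]
    {P : 𝒜 → Prop} (hP : IsSerreClass P) {F E T : 𝒜}
    (u : F ⟶ E) (hu : Mono u) (hq : P (cokernel u))
    (hE : IsTorsionFreeFor P E) {ι : F ⟶ T} (hι : IsHullFor P ι) :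
    (∃! w : E ⟶ T, u ≫ w = ι) ∧ ∀ w : E ⟶ T, u ≫ w = ι → Mono w := by
  obtain ⟨-, hsub, hquot, -⟩ := hP
  obtain ⟨hmι, -, hT, hsplit⟩ := hι
  refine ⟨?_, ?_⟩
  · have hpo : IsPushout ι u (pushout.inr u ι) (pushout.inl u ι) :=
      (IsPushout.of_hasPushout u ι).flip
    have hiso := isIso_cokernel_map_of_isPushout hpo.flip
    have hc : P (cokernel (pushout.inr u ι)) := hquot _ (@IsIso.epi_of_iso _ _ _ _ _ hiso) hq
    obtain ⟨r, hr⟩ := hsplit (pushout.inr u ι) inferInstance hc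
    refine ⟨pushout.inl u ι ≫ r, ?_, ?_⟩
    · change u ≫ pushout.inl u ι ≫ r = ι
      rw [← Category.assoc, pushout.condition, Category.assoc, hr, Category.comp_id]
    · intro w hw
      have h0 : u ≫ (w - pushout.inl u ι ≫ r) = 0 := by
        rw [Preadditive.comp_sub, hw, ← Category.assoc, pushout.condition, Category.assoc, hr,
          Category.comp_id, sub_self]
      have h1 := cokernel.π_desc u _ h0
      rw [hT hq (cokernel.desc u _ h0), comp_zero] at h1
      exact sub_eq_zero.mp h1.symm
  · intro w hw
    have hm : Mono (kernel.ι w ≫ cokernel.π u) := by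
      refine Preadditive.mono_of_cancel_zero _ fun {G} x hx => ?_
      rw [← Category.assoc] at hx
      have hy : Abelian.monoLift u _ hx ≫ u = x ≫ kernel.ι w := Abelian.monoLift_comp u _ hx
      have hy0 : Abelian.monoLift u _ hx = 0 := by
        rw [← cancel_mono ι, ← hw, ← Category.assoc, hy]
        simp
      rw [hy0, zero_comp] at hy
      exact (cancel_mono (kernel.ι w)).mp (by rw [← hy, zero_comp])
    exact Preadditive.mono_of_kernel_zero (hE (hsub _ hm hq) (kernel.ι w))
end

section
/- Let a > 0 and α, β be real numbers with α > a²/6 + |β|·a/2. Then there exists a nonempty open interval I ⊆ (a², 6α) such that for every K ∈ I one has K − 6α < 0 and (K − 6α)·(a⁴ − K·a²) − (9/4)·β²·a⁴ > 0; equivalently, for every K ∈ I the symmetric 2×2 real matrix with diagonal entries K − 6α and a⁴ − K·a² and both off-diagonal entries equal to −(3/2)·β·a² is negative definite. -/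
/-- **Computational core of the support-property lemma.** If `a > 0` and
`α > a²/6 + |β|·a/2`, then there is a nonempty open interval `I ⊆ (a², 6α)` such that for
every `K ∈ I` one has `K − 6α < 0` and `(K − 6α)·(a⁴ − K·a²) − (9/4)·β²·a⁴ > 0`; i.e. the
symmetric `2×2` matrix with diagonal `K − 6α`, `a⁴ − K·a²` and off-diagonal `−(3/2)·β·a²`
is negative definite. -/
theorem exists_interval_matrix_negdef (a α β : ℝ) (ha : 0 < a)
    (hα : α > a ^ 2 / 6 + |β| * a / 2) :
    ∃ K₁ K₂ : ℝ, K₁ < K₂ ∧ a ^ 2 ≤ K₁ ∧ K₂ ≤ 6 * α ∧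
      ∀ K ∈ Set.Ioo K₁ K₂,
        K - 6 * α < 0 ∧
        (K - 6 * α) * (a ^ 4 - K * a ^ 2) - (9 / 4) * β ^ 2 * a ^ 4 > 0 := by
  have hb : 0 ≤ |β| * a := mul_nonneg (abs_nonneg β) ha.le
  refine ⟨a ^ 2 + 3 / 2 * (|β| * a), 6 * α - 3 / 2 * (|β| * a), by linarith, by linarith,
    by linarith, ?_⟩
  rintro K ⟨h1, h2⟩
  refine ⟨by linarith, ?_⟩
  have hp : (3 / 2 * (|β| * a)) * (3 / 2 * (|β| * a)) < (6 * α - K) * (K - a ^ 2) :=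
    mul_lt_mul'' (by linarith) (by linarith) (by linarith) (by linarith)
  have hs : (3 / 2 * (|β| * a)) * (3 / 2 * (|β| * a)) = 9 / 4 * β ^ 2 * a ^ 2 := by
    rw [← sq_abs β]; ring
  rw [hs] at hp
  have hm := mul_pos (pow_pos ha 2) (sub_pos.mpr hp)
  linarith
end

section
/- With the notation of the context, let s, q ∈ ℝ and suppose v₂ = s·v₁ + q·v₀. Then for all b₁, b₂ ∈ ℝ one has Q(b₁, s·b₁ + q; ξ, g)(v)·(v₁ − b₂·v₀) = Q(b₂, s·b₂ + q; ξ, g)(v)·(v₁ − b₁·v₀). In particular, along the line {(b, w) : w = s·b + q}, the quantity Q(b, s·b + q; ξ, g)(v)/(v₁ − b·v₀) is independent of b wherever v₁ − b·v₀ ≠ 0. -/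
/-- Twisted first component `v₁ᵇ = v₁ − b·v₀`. -/
noncomputable def vb1 (b v₀ v₁ : ℝ) : ℝ := v₁ - b * v₀

/-- Twisted second component `v₂ᵇ = v₂ − b·v₁ + (b²/2)·v₀`. -/
noncomputable def vb2 (b v₀ v₁ v₂ : ℝ) : ℝ := v₂ - b * v₁ + (b ^ 2 / 2) * v₀

/-- Twisted third component `v₃ᵇ = v₃ − b·v₂ + (b²/2)·v₁ − (b³/6)·v₀`. -/
noncomputable def vb3 (b v₀ v₁ v₂ v₃ : ℝ) : ℝ :=
  v₃ - b * v₂ + (b ^ 2 / 2) * v₁ - (b ^ 3 / 6) * v₀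

/-- The quadratic quantity `Q^Γ_{b,w}(v)` of the generalized Bogomolov–Gieseker
inequality, with `ξ = Γ.H/H³` and `g = Γ.ch₁`. -/
noncomputable def Qbw (b w ξ g v₀ v₁ v₂ v₃ : ℝ) : ℝ :=
  (2 * w - b ^ 2) * (v₁ ^ 2 - 2 * v₀ * v₂ + 3 * ξ * v₀ ^ 2) +
    2 * vb2 b v₀ v₁ v₂ * (2 * vb2 b v₀ v₁ v₂ - 3 * ξ * v₀) -
    6 * vb1 b v₀ v₁ * (vb3 b v₀ v₁ v₂ v₃ - g + b * ξ * v₀)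

/-- **`Q` along a numerical wall.** If `v₂ = s·v₁ + q·v₀`, then along the line `w = s·b + q`
one has `Q(b₁)(v₁ − b₂·v₀) = Q(b₂)(v₁ − b₁·v₀)` for all `b₁, b₂`; in particular,
`Q(b, s·b + q; ξ, g)(v)/(v₁ − b·v₀)` is independent of `b` wherever `v₁ − b·v₀ ≠ 0`. -/
theorem Qbw_on_wall (ξ g v₀ v₁ v₂ v₃ s q : ℝ) (h : v₂ = s * v₁ + q * v₀) :
    (∀ b₁ b₂ : ℝ,
        Qbw b₁ (s * b₁ + q) ξ g v₀ v₁ v₂ v₃ * (v₁ - b₂ * v₀) =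
          Qbw b₂ (s * b₂ + q) ξ g v₀ v₁ v₂ v₃ * (v₁ - b₁ * v₀)) ∧
      ∀ b₁ b₂ : ℝ, v₁ - b₁ * v₀ ≠ 0 → v₁ - b₂ * v₀ ≠ 0 →
        Qbw b₁ (s * b₁ + q) ξ g v₀ v₁ v₂ v₃ / (v₁ - b₁ * v₀) =
          Qbw b₂ (s * b₂ + q) ξ g v₀ v₁ v₂ v₃ / (v₁ - b₂ * v₀) := by
  have key : ∀ b₁ b₂ : ℝ,
      Qbw b₁ (s * b₁ + q) ξ g v₀ v₁ v₂ v₃ * (v₁ - b₂ * v₀) =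
        Qbw b₂ (s * b₂ + q) ξ g v₀ v₁ v₂ v₃ * (v₁ - b₁ * v₀) := by
    intro b₁ b₂
    subst h
    simp only [Qbw, vb1, vb2, vb3]
    ring
  refine ⟨key, fun b₁ b₂ h₁ h₂ => ?_⟩
  rw [div_eq_div_iff h₁ h₂]
  exact key b₁ b₂
end

section
/- Let v₀, v₁, v₂, v₃, g be real numbers and ξ ≥ 0 a real number, with v₀ ≠ 0 and D := v₁² − 2·v₀·v₂ ≥ 0. For a > 0 define b(a) := (v₁ − √(D + a²·v₀²))/v₀ and f(a) := v₃ − b(a)·v₂ + (b(a)²/2)·v₁ − (b(a)³/6)·v₀ − (a²/6)·(v₁ − b(a)·v₀) − g + b(a)·ξ·v₀. Then f is non-increasing on (0, +∞): for all real numbers 0 < a₁ ≤ a₂ one has f(a₁) ≥ f(a₂). -/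
/-- The branch `b(a) = (v₁ − √(D + a²·v₀²))/v₀` of the curve `ν_{b,w}(v) = b`,
where `D = v₁² − 2·v₀·v₂`. -/
noncomputable def bBranch (v₀ v₁ v₂ : ℝ) (a : ℝ) : ℝ :=
  (v₁ - Real.sqrt ((v₁ ^ 2 - 2 * v₀ * v₂) + a ^ 2 * v₀ ^ 2)) / v₀

/-- The function
`f(a) = v₃ − b(a)·v₂ + (b(a)²/2)·v₁ − (b(a)³/6)·v₀ − (a²/6)·(v₁ − b(a)·v₀) − g + b(a)·ξ·v₀`. -/
noncomputable def fBranch (v₀ v₁ v₂ v₃ g ξ : ℝ) (a : ℝ) : ℝ :=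
  v₃ - bBranch v₀ v₁ v₂ a * v₂ + (bBranch v₀ v₁ v₂ a ^ 2 / 2) * v₁ -
    (bBranch v₀ v₁ v₂ a ^ 3 / 6) * v₀ -
    (a ^ 2 / 6) * (v₁ - bBranch v₀ v₁ v₂ a * v₀) - g + bBranch v₀ v₁ v₂ a * ξ * v₀

theorem fBranch_formula (v₀ v₁ v₂ v₃ g ξ a : ℝ) (hv₀ : v₀ ≠ 0)
    (hD : 0 ≤ v₁ ^ 2 - 2 * v₀ * v₂) :
    fBranch v₀ v₁ v₂ v₃ g ξ a = v₃ - v₁ * v₂ / v₀ + v₁ ^ 3 / (3 * v₀ ^ 2) - g + ξ * v₁ -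
      ((v₁ ^ 2 - 2 * v₀ * v₂) / (3 * v₀ ^ 2) + ξ) *
        Real.sqrt ((v₁ ^ 2 - 2 * v₀ * v₂) + a ^ 2 * v₀ ^ 2) := by
  have hs : Real.sqrt ((v₁ ^ 2 - 2 * v₀ * v₂) + a ^ 2 * v₀ ^ 2) ^ 2 =
      (v₁ ^ 2 - 2 * v₀ * v₂) + a ^ 2 * v₀ ^ 2 := Real.sq_sqrt (by positivity)
  unfold fBranch bBranch
  generalize Real.sqrt ((v₁ ^ 2 - 2 * v₀ * v₂) + a ^ 2 * v₀ ^ 2) = s at *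
  have ha : a ^ 2 = (s ^ 2 - (v₁ ^ 2 - 2 * v₀ * v₂)) / v₀ ^ 2 := by
    field_simp
    linarith
  rw [ha]
  field_simp
  ring

/-- **Monotonicity along the branch.** If `ξ ≥ 0`, `v₀ ≠ 0` and `D = v₁² − 2·v₀·v₂ ≥ 0`,
then `f` is non-increasing on `(0, +∞)`: for `0 < a₁ ≤ a₂` one has `f(a₁) ≥ f(a₂)`. -/
theorem fBranch_antitone (v₀ v₁ v₂ v₃ g ξ : ℝ) (hξ : 0 ≤ ξ) (hv₀ : v₀ ≠ 0)
    (hD : 0 ≤ v₁ ^ 2 - 2 * v₀ * v₂) :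
    ∀ a₁ a₂ : ℝ, 0 < a₁ → a₁ ≤ a₂ →
      fBranch v₀ v₁ v₂ v₃ g ξ a₂ ≤ fBranch v₀ v₁ v₂ v₃ g ξ a₁ := by
  intro a₁ a₂ h1 h12
  rw [fBranch_formula _ _ _ _ _ _ _ hv₀ hD, fBranch_formula _ _ _ _ _ _ _ hv₀ hD]
  have hs : Real.sqrt ((v₁ ^ 2 - 2 * v₀ * v₂) + a₁ ^ 2 * v₀ ^ 2) ≤
      Real.sqrt ((v₁ ^ 2 - 2 * v₀ * v₂) + a₂ ^ 2 * v₀ ^ 2) := by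
    apply Real.sqrt_le_sqrt
    gcongr
  have hc : 0 ≤ (v₁ ^ 2 - 2 * v₀ * v₂) / (3 * v₀ ^ 2) + ξ :=
    add_nonneg (div_nonneg hD (by positivity)) hξ
  have := mul_le_mul_of_nonneg_left hs hc
  linarith
end

section
/- Let Φ : ℝ → ℝ ∪ {−∞, +∞} be an upper semicontinuous function and let b, w be real numbers with Φ(b) < w. Define R := {(b, w + t) : t ∈ ℝ, t ≥ 0} ⊆ ℝ² and S := {(x, y) ∈ ℝ² : y ≤ Φ(x)} (the inequality taken in ℝ ∪ {−∞, +∞}). Then the Euclidean distance between R and S is positive: there exists δ > 0 such that dist(p, q) ≥ δ for every p ∈ R and every q ∈ S. -/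
/-- The Euclidean distance on `ℝ²`. -/
noncomputable def euclDist (p q : ℝ × ℝ) : ℝ :=
  Real.sqrt ((p.1 - q.1) ^ 2 + (p.2 - q.2) ^ 2)

/-- **Positive distance between a vertical ray and the hypograph of an upper semicontinuous
function.** If `Φ : ℝ → ℝ ∪ {±∞}` is upper semicontinuous and `Φ(b) < w`, then the ray
`R = {(b, w + t) : t ≥ 0}` and the hypograph `S = {(x, y) : y ≤ Φ(x)}` are at positive
Euclidean distance. -/
theorem ray_dist_hypograph_pos (Φ : ℝ → EReal) (hΦ : UpperSemicontinuous Φ)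
    (b w : ℝ) (h : Φ b < (w : EReal)) :
    ∃ δ : ℝ, 0 < δ ∧
      ∀ p : ℝ × ℝ, p.1 = b ∧ w ≤ p.2 →
        ∀ q : ℝ × ℝ, (q.2 : EReal) ≤ Φ q.1 →
          δ ≤ euclDist p q := by
  obtain ⟨r, hr1, hr2⟩ := EReal.lt_iff_exists_real_btwn.1 h
  have hr2 : r < w := by exact_mod_cast hr2
  obtain ⟨ε, hε, hb⟩ := Metric.eventually_nhds_iff.1 (hΦ b r hr1)
  refine ⟨min ε (w - r), lt_min hε (by linarith), ?_⟩
  rintro p ⟨hp1, hp2⟩ q hq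
  unfold euclDist
  by_cases hd : dist q.1 b < ε
  · have h1 : q.2 < r := by exact_mod_cast lt_of_le_of_lt hq (hb hd)
    refine (min_le_right _ _).trans (Real.le_sqrt_of_sq_le ?_)
    nlinarith [sq_nonneg (p.1 - q.1)]
  · refine (min_le_left _ _).trans (Real.le_sqrt_of_sq_le ?_)
    have h2 : ε ≤ |p.1 - q.1| := by
      rw [hp1, abs_sub_comm, ← Real.dist_eq]
      exact not_lt.1 hd
    have h3 : ε ^ 2 ≤ (p.1 - q.1) ^ 2 := by
      rw [← sq_abs (p.1 - q.1)]
      exact pow_le_pow_left₀ hε.le h2 2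
    nlinarith [sq_nonneg (p.2 - q.2)]
end
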